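/- arXiv:1703.09378 — 3 statements merged into one kernel-verified Lean document; each statement's English description precedes it below -/
import Mathlib

section
/- Let k ≥ 2 and let G be a finite 2-connected simple graph of order n ≥ 2k−1 with m edges, where m ≥ (k−1)(n−1)+1. Then G is k-color connectable and cc_k(G) ≤ 2k−1. -/
open SimpleGraph

/-- `c` is a `k`-color connecting edge-coloring of `G`: between every pair of distinct
vertices there is a path whose edges use at least `k` different colors. -/
def SimpleGraph.IsKColorConnecting {V : Type*} (G : SimpleGraph V) (k : ℕ)
    (c : Sym2 V → ℕ) : Prop :=
  ∀ u v : V, u ≠ v → ∃ p : G.Walk u v, p.IsPath ∧ k ≤ (p.edges.map c).toFinset.card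

/-- `G` is `k`-color connectable: it admits a `k`-color connecting coloring. -/
def SimpleGraph.KColorConnectable {V : Type*} (G : SimpleGraph V) (k : ℕ) : Prop :=
  ∃ c : Sym2 V → ℕ, G.IsKColorConnecting k c

/-- The `k`-color connection number `cc_k(G)`: the minimum number of colors used on the
edges of `G` by a `k`-color connecting coloring. -/
noncomputable def SimpleGraph.ccConn {V : Type*} (G : SimpleGraph V) (k : ℕ) : ℕ :=
  sInf {n : ℕ | ∃ c : Sym2 V → ℕ, G.IsKColorConnecting k c ∧ (c '' G.edgeSet).ncard = n}

/-- A graph is 2-connected if it has at least 3 vertices, is connected, and remains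
connected after deleting any single vertex. -/
def SimpleGraph.IsTwoConnected {V : Type*} (G : SimpleGraph V) : Prop :=
  3 ≤ Nat.card V ∧ G.Connected ∧ ∀ v : V, (G.induce {v}ᶜ).Connected


namespace EG
variable {V : Type*} (G : SimpleGraph V)

/-- `l` lists the vertices of a path inside `U`. -/
def PL (U : Finset V) (l : List V) : Prop :=
  l.IsChain G.Adj ∧ l.Nodup ∧ ∀ x ∈ l, x ∈ U

/-- there is a cycle with at least `N` vertices, given as a list. -/
def LongCyc (N : ℕ) : Prop :=
  ∃ (x : V) (D : List V) (y : V), (x :: (D ++ [y])).IsChain G.Adj ∧ (x :: (D ++ [y])).Nodup ∧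
    G.Adj y x ∧ N ≤ (x :: (D ++ [y])).length

lemma rot [DecidableEq V] (U : Finset V) (x y : V) (C A : List V) (h : PL G U (x :: C ++ A))
    (hy : y ∈ C) (hxy : G.Adj x y) :
    ∃ z C', (x :: C)[C.idxOf y]? = some z ∧ PL G U (z :: C' ++ A) ∧ (z :: C').Perm (x :: C) := by
  obtain ⟨D, E, rfl, hD⟩ := List.eq_append_cons_of_mem hy
  have hi : (D ++ y :: E).idxOf y = D.length := by
    rw [List.idxOf_append_of_notMem hD]; simp
  obtain ⟨D', z, hz⟩ : ∃ D' z, x :: D = D' ++ [z] := by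
    rcases List.eq_nil_or_concat (x :: D) with h | ⟨L, b, h⟩
    · simp at h
    · exact ⟨L, b, by simpa using h⟩
  have hlen : D'.length = D.length := by
    have := congrArg List.length hz
    simpa using this.symm
  have hrev : z :: D'.reverse = (x :: D).reverse := by rw [hz]; simp
  have hperm : (z :: (D'.reverse ++ y :: E)).Perm (x :: (D ++ y :: E)) := by
    rw [← List.cons_append, hrev, ← List.cons_append]
    exact (List.reverse_perm _).append_right _
  refine ⟨z, D'.reverse ++ y :: E, ?_, ⟨?_, ?_, ?_⟩, hperm⟩
  · rw [hi, ← List.cons_append, hz, ← hlen]; simp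
  · have h1 := h.1
    rw [show x :: (D ++ y :: E) ++ A = (x :: D) ++ (y :: E ++ A) by simp] at h1
    rw [show z :: (D'.reverse ++ y :: E) ++ A = (z :: D'.reverse) ++ (y :: E ++ A) by simp, hrev]
    rw [List.isChain_append] at h1 ⊢
    refine ⟨?_, h1.2.1, ?_⟩
    · rw [List.isChain_reverse]
      simpa [SimpleGraph.adj_comm] using h1.1
    · intro a ha b hb
      simp at ha hb
      subst ha hb; exact hxy
  · exact ((hperm.append_right A).nodup_iff).2 h.2.1
  · intro a ha
    exact h.2.2 a ((hperm.append_right A).mem_iff.1 ha)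

open Classical in
lemma exists_S (d : ℕ) (hd : 1 ≤ d) (hc : ¬ LongCyc G (2 * d + 1)) (U : Finset V)
    (hU : U.Nonempty) : ∃ S ⊆ U, S.Nonempty ∧ S.card ≤ 2 * d ∧
      ∀ x ∈ S, (U.filter (G.Adj x)).card + ((U \ S).filter (G.Adj x)).card ≤ 2 * d := by
  -- longest path
  obtain ⟨L, hL, hmax⟩ : ∃ L, PL G U L ∧ ∀ L', PL G U L' → L'.length ≤ L.length := by
    have hbd : ∀ L', PL G U L' → L'.length ≤ U.card := by
      intro L' h
      rw [← List.toFinset_card_of_nodup h.2.1]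
      apply Finset.card_le_card
      intro x hx
      exact h.2.2 x (by simpa using hx)
    have hP : ∃ n, ∃ L, PL G U L ∧ L.length = n := ⟨0, [], by simp [PL]⟩
    have hP' : ∃ L, PL G U L ∧ L.length =
        Nat.findGreatest (fun n => ∃ L, PL G U L ∧ L.length = n) U.card :=
      Nat.findGreatest_spec (P := fun n => ∃ L, PL G U L ∧ L.length = n) (m := 0) (Nat.zero_le _)
        ⟨[], by simp [PL]⟩
    obtain ⟨L, hL, hl⟩ := hP'
    refine ⟨L, hL, fun L' h' => ?_⟩
    rw [hl]
    exact Nat.le_findGreatest (hbd _ h') ⟨L', h', rfl⟩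
  have hLne : L ≠ [] := by
    obtain ⟨u, hu⟩ := hU
    have := hmax [u] (by simp [PL, hu])
    intro h; simp [h] at this
  set B := L.take (2 * d) with hB
  set A := L.drop (2 * d) with hA
  have hBA : L = B ++ A := (List.take_append_drop _ _).symm
  let S := U.filter (fun x => ∃ C, PL G U (x :: C ++ A) ∧ (x :: C).Perm B)
  have hSB : S ⊆ B.toFinset := by
    intro x hx
    obtain ⟨-, C, -, hp⟩ := Finset.mem_filter.1 hx
    simpa using hp.mem_iff.1 (List.mem_cons_self)
  have hBlen : B.toFinset.card ≤ 2 * d :=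
    (List.toFinset_card_le _).trans (by simp [hB])
  refine ⟨S, Finset.filter_subset _ _, ?_, (Finset.card_le_card hSB).trans hBlen, ?_⟩
  · rcases hBe : B with _ | ⟨x, C⟩
    · have : B.length = 0 := by simp [hBe]
      have hp := List.length_pos_iff.2 hLne
      rw [hB, List.length_take] at this
      omega
    · refine ⟨x, Finset.mem_filter.2 ⟨?_, C, ?_, ?_⟩⟩
      · apply hL.2.2; rw [hBA, hBe]; simp
      · rw [← hBe, ← hBA]; exact hL
      · rw [hBe]
  · intro x hx
    obtain ⟨hxU, C, hPL, hp⟩ := Finset.mem_filter.1 hx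
    -- neighbours
    have hN : ∀ y ∈ U, G.Adj x y → y ∈ C := by
      intro y hy hxy
      by_contra hyC
      have hyx : y ≠ x := hxy.ne'
      by_cases hyA : y ∈ A
      · obtain ⟨A1, A2, hA12⟩ : ∃ A1 A2, A = A1 ++ y :: A2 := List.append_of_mem hyA
        rw [hA12] at hPL
        apply hc
        have hBl : B.length = 2 * d := by
          have : 0 < (L.drop (2 * d)).length := by rw [← hA, hA12]; simp
          simp at this
          simp [hB]; omega
        have hpl := hp.length_eq
        refine ⟨x, C ++ A1, y, ?_, ?_, hxy.symm, ?_⟩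
        · have h1 := hPL.1
          rw [show x :: C ++ (A1 ++ y :: A2) = (x :: (C ++ A1 ++ [y])) ++ A2 by simp] at h1
          exact h1.left_of_append
        · have h1 := hPL.2.1
          rw [show x :: C ++ (A1 ++ y :: A2) = (x :: (C ++ A1 ++ [y])) ++ A2 by simp] at h1
          exact h1.of_append_left
        · simp at hpl ⊢; omega
      · have := hmax (y :: (x :: C ++ A)) ⟨?_, ?_, ?_⟩
        · have hpl := hp.length_eq
          rw [hBA] at this
          simp at this hpl
          omega
        · simp only [List.cons_append, List.isChain_cons_cons]
          exact ⟨hxy.symm, hPL.1⟩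
        · refine List.nodup_cons.2 ⟨?_, hPL.2.1⟩
          simp [hyx, hyC, hyA]
        · intro a ha
          rcases List.mem_cons.1 ha with rfl | ha
          · exact hy
          · exact hPL.2.2 a ha
    have hnd : (x :: C).Nodup := hPL.2.1.of_append_left
    have h1 : (U.filter (G.Adj x)).card ≤ S.card := by
      refine Finset.card_le_card_of_injOn (fun y => ((x :: C)[C.idxOf y]?).getD x) ?_ ?_
      · intro y hy
        obtain ⟨hy, hxy⟩ := Finset.mem_filter.1 hy
        obtain ⟨z, C', hz, hP', hp'⟩ := rot G U x y C A hPL (hN y hy hxy) hxy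
        simp only [hz, Option.getD_some]
        refine Finset.mem_filter.2 ⟨hP'.2.2 z (by simp), C', hP', hp'.trans hp⟩
      · intro y hy y' hy' h
        obtain ⟨hy, hxy⟩ := Finset.mem_filter.1 hy
        obtain ⟨hy', hxy'⟩ := Finset.mem_filter.1 hy'
        have hi := List.idxOf_lt_length_of_mem (hN y hy hxy)
        have hi' := List.idxOf_lt_length_of_mem (hN y' hy' hxy')
        have hi1 : C.idxOf y < (x :: C).length := by simp; omega
        have hi1' : C.idxOf y' < (x :: C).length := by simp; omega
        simp only [List.getElem?_eq_getElem hi1, List.getElem?_eq_getElem hi1',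
          Option.getD_some] at h
        have := (hnd.getElem_inj_iff).1 h
        exact (List.idxOf_inj (hN y hy hxy)).1 this
    have h2 : ((U \ S).filter (G.Adj x)).card ≤ (B.toFinset \ S).card := by
      apply Finset.card_le_card
      intro y hy
      simp only [Finset.mem_filter, Finset.mem_sdiff] at hy ⊢
      refine ⟨?_, hy.1.2⟩
      have := hp.mem_iff.1 (List.mem_cons_of_mem x (hN y hy.1.1 hy.2))
      simpa using this
    have h3 := Finset.card_sdiff_add_card_eq_card hSB
    omega

open Classical in
lemma sum_bound (d : ℕ) (hd : 1 ≤ d) (hc : ¬ LongCyc G (2 * d + 1)) (U : Finset V)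
    (hU : U.Nonempty) :
    ∑ u ∈ U, (U.filter (G.Adj u)).card + 2 * d ≤ 2 * d * U.card := by
  induction U using Finset.strongInduction with
  | H U ih =>
  obtain ⟨S, hSU, hSne, hSc, hS⟩ := exists_S G d hd hc U hU
  by_cases hUS : (U \ S).Nonempty
  · have h1 := ih (U \ S) (Finset.sdiff_ssubset hSU hSne) hUS
    have hcard := Finset.card_sdiff_add_card_eq_card hSU
    have hsplit : ∑ u ∈ U, (U.filter (G.Adj u)).card =
        ∑ u ∈ U \ S, ((U \ S).filter (G.Adj u)).card +
        ∑ u ∈ S, ((U.filter (G.Adj u)).card + ((U \ S).filter (G.Adj u)).card) := by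
      rw [Finset.sum_add_distrib, ← Finset.sum_sdiff hSU]
      have e1 : ∑ u ∈ U \ S, (U.filter (G.Adj u)).card =
          ∑ u ∈ U \ S, ((U \ S).filter (G.Adj u)).card +
          ∑ u ∈ U \ S, (S.filter (G.Adj u)).card := by
        rw [← Finset.sum_add_distrib]
        refine Finset.sum_congr rfl fun u _ => ?_
        simp only [Finset.card_filter]
        rw [Finset.sum_sdiff hSU]
      have e2 : ∑ u ∈ U \ S, (S.filter (G.Adj u)).card =
          ∑ u ∈ S, ((U \ S).filter (G.Adj u)).card := by
        simp only [Finset.card_filter]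
        rw [Finset.sum_comm]
        simp only [SimpleGraph.adj_comm]
      omega
    have h2 : ∑ u ∈ S, ((U.filter (G.Adj u)).card + ((U \ S).filter (G.Adj u)).card) ≤
        S.card * (2 * d) := by
      rw [← smul_eq_mul]
      exact Finset.sum_le_card_nsmul _ _ _ hS
    rw [hsplit, ← hcard]
    nlinarith
  · have hUS' : U ⊆ S := by
      rwa [Finset.not_nonempty_iff_eq_empty, Finset.sdiff_eq_empty_iff_subset] at hUS
    have hc' : U.card ≤ 2 * d := (Finset.card_le_card hUS').trans hSc
    have h2 : ∑ u ∈ U, (U.filter (G.Adj u)).card ≤ U.card * (U.card - 1) := by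
      rw [← smul_eq_mul]
      apply Finset.sum_le_card_nsmul
      intro u hu
      rw [← Finset.card_erase_of_mem hu]
      apply Finset.card_le_card
      intro v hv
      obtain ⟨hv, h⟩ := Finset.mem_filter.1 hv
      exact Finset.mem_erase.2 ⟨h.ne', hv⟩
    have hpos := hU.card_pos
    obtain ⟨n, hn⟩ : ∃ n, U.card = n + 1 := ⟨U.card - 1, by omega⟩
    rw [hn] at h2 hc' ⊢
    simp at h2
    nlinarith

lemma exists_cycle [Fintype V] [Nonempty V] (d : ℕ) (hd : 1 ≤ d)
    (hm : d * (Fintype.card V - 1) + 1 ≤ G.edgeSet.ncard) :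
    ∃ (x : V) (p : G.Walk x x), p.IsCycle ∧ 2 * d + 1 ≤ p.length := by
  classical
  have hL : LongCyc G (2 * d + 1) := by
    by_contra hc
    have h := sum_bound G d hd hc Finset.univ Finset.univ_nonempty
    have h2 := G.sum_degrees_eq_twice_card_edges
    have h3 : G.edgeSet.ncard = G.edgeFinset.card := by
      rw [← SimpleGraph.coe_edgeFinset, Set.ncard_coe_finset]
    have h4 : ∀ u, (Finset.univ.filter (G.Adj u)).card = G.degree u := by
      intro u
      rw [← SimpleGraph.card_neighborFinset_eq_degree]
      congr 1
      ext; simp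
    simp only [h4] at h
    rw [h2] at h
    have hpos : 0 < Fintype.card V := Fintype.card_pos
    rw [h3] at hm
    simp only [Finset.card_univ] at h
    obtain ⟨n, hn⟩ : ∃ n, Fintype.card V = n + 1 := ⟨Fintype.card V - 1, by omega⟩
    rw [hn] at hm h
    simp at hm
    nlinarith
  obtain ⟨x, D, y, hch, hnd, hyx, hlen⟩ := hL
  let w := Walk.ofSupport _ (List.cons_ne_nil x (D ++ [y])) hch
  have hs : w.support = _ := Walk.support_ofSupport _ _
  have e1 : (x :: (D ++ [y])).head (List.cons_ne_nil x (D ++ [y])) = x := by simp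
  have e2 : (x :: (D ++ [y])).getLast (List.cons_ne_nil x (D ++ [y])) = y := by simp
  obtain ⟨w', hw'⟩ : ∃ w' : G.Walk x y, w'.support = x :: (D ++ [y]) :=
    ⟨w.copy e1 e2, (Walk.support_copy _ _ _).trans hs⟩
  have hwp : w'.IsPath := by
    rw [Walk.isPath_def, hw']; exact hnd
  have hl := congrArg List.length hw'
  rw [Walk.length_support] at hl
  refine ⟨y, Walk.cons hyx w', ?_, ?_⟩
  · rw [Walk.cons_isCycle_iff]
    refine ⟨hwp, fun hmem => ?_⟩
    cases w' with
    | nil => simp at hmem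
    | cons h p =>
      rw [Walk.edges_cons, List.mem_cons] at hmem
      rw [Walk.cons_isPath_iff] at hwp
      rcases hmem with hmem | hmem
      · rw [Sym2.eq_swap] at hmem
        have := Sym2.congr_right.1 hmem
        subst this
        have := Walk.length_eq_zero_iff.2 ((Walk.isPath_iff_nil).1 hwp.1)
        simp only [Walk.length_cons, List.length_cons, List.length_append, List.length_nil] at hl hlen
        omega
      · exact hwp.2 (Walk.snd_mem_support_of_mem_edges p hmem)
  · simp at hl hlen ⊢; omega
end EG
namespace EG
variable {V : Type*} {G : SimpleGraph V}

lemma trunc (B : Set V) {u b : V} (p : G.Walk u b) (hb : b ∈ B) :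
    ∃ x ∈ B, ∃ q : G.Walk u x, q.IsPath ∧ (∀ z ∈ q.support, z ∈ p.support) ∧
      ∀ z ∈ q.support, z ∈ B → z = x := by
  classical
  suffices ∃ x ∈ B, ∃ q : G.Walk u x, (∀ z ∈ q.support, z ∈ p.support) ∧
      ∀ z ∈ q.support, z ∈ B → z = x by
    obtain ⟨x, hx, q, h1, h2⟩ := this
    exact ⟨x, hx, q.bypass, q.bypass_isPath, fun z hz => h1 z (q.support_bypass_subset_support hz),
      fun z hz => h2 z (q.support_bypass_subset_support hz)⟩
  induction p with
  | nil => exact ⟨_, hb, Walk.nil, by simp, by simp⟩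
  | @cons u u' b h p ih =>
    by_cases hu : u ∈ B
    · exact ⟨u, hu, Walk.nil, by simp, by simp⟩
    · obtain ⟨x, hx, q, h1, h2⟩ := ih hb
      refine ⟨x, hx, Walk.cons h q, ?_, ?_⟩
      · intro z hz
        simp only [Walk.support_cons, List.mem_cons] at hz ⊢
        exact hz.imp id (h1 z)
      · intro z hz hzB
        simp only [Walk.support_cons, List.mem_cons] at hz
        rcases hz with rfl | hz
        · exact absurd hzB hu
        · exact h2 z hz hzB

lemma avoid (hG : ∀ v : V, (G.induce {v}ᶜ).Connected) {a u v : V} (hu : u ≠ a) (hv : v ≠ a) :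
    ∃ p : G.Walk u v, a ∉ p.support := by
  have hu' : u ∈ ({a}ᶜ : Set V) := hu
  have hv' : v ∈ ({a}ᶜ : Set V) := hv
  obtain ⟨p⟩ := (hG a).preconnected ⟨u, hu'⟩ ⟨v, hv'⟩
  refine ⟨p.map (Embedding.induce ({a}ᶜ : Set V)).toHom, ?_⟩
  intro h
  replace h := (Walk.support_map (Embedding.induce ({a}ᶜ : Set V)).toHom p) ▸ h
  obtain ⟨z, -, hz⟩ := List.mem_map.1 h
  exact z.2 hz

lemma link (hG : ∀ v : V, (G.induce {v}ᶜ).Connected) (B : Set V) (hB : B.Nontrivial) (v : V)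
    {u b : V} (p : G.Walk u b) (hb : b ∈ B) (hv : v ∉ p.support) :
    ∃ x ∈ B, ∃ y ∈ B, ∃ (P : G.Walk u x) (Q : G.Walk v y), P.IsPath ∧ Q.IsPath ∧
      ∀ z ∈ P.support, z ∉ Q.support := by
  classical
  induction p with
  | @nil u =>
    obtain ⟨b', hb', hne⟩ := hB.exists_ne u
    simp only [Walk.support_nil, List.mem_singleton] at hv
    obtain ⟨q, hq⟩ := avoid hG (a := u) hv hne
    refine ⟨u, hb, b', hb', Walk.nil, q.bypass, Walk.IsPath.nil, q.bypass_isPath, ?_⟩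
    intro z hz hz'
    simp only [Walk.support_nil, List.mem_singleton] at hz
    subst hz
    exact hq (q.support_bypass_subset_support hz')
  | @cons u u' b h p ih =>
    simp only [Walk.support_cons, List.mem_cons, not_or] at hv
    obtain ⟨x, hx, y, hy, P, Q, hP, hQ, hd⟩ := ih hb hv.2
    by_cases huP : u ∈ P.support
    · exact ⟨x, hx, y, hy, P.dropUntil u huP, Q, hP.dropUntil huP, hQ,
        fun z hz => hd z (P.support_dropUntil_subset_support huP hz)⟩
    by_cases huQ : u ∈ Q.support
    · let Q2 := Q.dropUntil u huQ
      have hQ2 : Q2.IsPath := hQ.dropUntil huQ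
      have hQ2s : ∀ z ∈ Q2.support, z ∈ Q.support := fun z hz =>
        Q.support_dropUntil_subset_support huQ hz
      obtain ⟨R0, hR0⟩ := avoid hG (a := u) hv.1 h.ne'
      obtain ⟨w, hw, R, hR, hRs, hRw⟩ :=
        trunc ({z | z ∈ P.support} ∪ {z | z ∈ Q2.support}) R0 (Or.inl P.start_mem_support)
      have huR : u ∉ R.support := fun hh => hR0 (hRs u hh)
      rcases hw with hw | hw
      · -- `w` lies on `P`
        refine ⟨y, hy, x, hx, Q2, (R.append (P.dropUntil w hw)).bypass, hQ2,
          Walk.bypass_isPath _, ?_⟩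
        intro z hz hz'
        have hz' := Walk.support_bypass_subset_support _ hz'
        rw [Walk.mem_support_append_iff] at hz'
        rcases hz' with hz' | hz'
        · have := hRw z hz' (Or.inr hz)
          subst this
          exact hd z hw (hQ2s z hz)
        · exact hd z (P.support_dropUntil_subset_support hw hz') (hQ2s z hz)
      · -- `w` lies on `Q2`
        refine ⟨x, hx, y, hy, Walk.cons h P, (R.append (Q2.dropUntil w hw)).bypass,
          hP.cons huP, Walk.bypass_isPath _, ?_⟩
        intro z hz hz'
        have hz' := Walk.support_bypass_subset_support _ hz'
        rw [Walk.mem_support_append_iff] at hz'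
        simp only [Walk.support_cons, List.mem_cons] at hz
        have hwu : w ≠ u := by
          rintro rfl; exact huR R.end_mem_support
        have hnu : u ∉ (Q2.dropUntil w hw).support := by
          intro hh
          have := hQ2
          rw [← Q2.take_spec hw, Walk.isPath_def, Walk.support_append] at this
          have hdis := (List.nodup_append'.1 this).2.2
          refine hdis (Walk.start_mem_support _) ?_
          rw [Walk.mem_support_iff] at hh
          exact hh.resolve_left hwu.symm
        rcases hz with rfl | hz
        · exact hz'.elim huR hnu
        · rcases hz' with hz' | hz'
          · have := hRw z hz' (Or.inl hz)
            subst this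
            exact hd z hz (hQ2s z hw)
          · exact hd z hz (hQ2s z (Q2.support_dropUntil_subset_support hw hz'))
    · refine ⟨x, hx, y, hy, Walk.cons h P, Q, hP.cons huP, hQ, ?_⟩
      intro z hz
      simp only [Walk.support_cons, List.mem_cons] at hz
      rcases hz with rfl | hz
      · exact huQ
      · exact hd z hz

lemma isPath_append' {a b c : V} {p : G.Walk a b} {q : G.Walk b c} (hp : p.IsPath) (hq : q.IsPath)
    (h : ∀ z ∈ p.support, z ∈ q.support → z = b) : (p.append q).IsPath := by
  rw [Walk.isPath_def, Walk.support_append, List.nodup_append']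
  refine ⟨hp.support_nodup, hq.support_nodup.tail, ?_⟩
  intro z hz hz'
  have hzb := h z hz (List.mem_of_mem_tail hz')
  have hn := hq.support_nodup
  rw [← Walk.cons_tail_support, List.nodup_cons] at hn
  subst hzb
  exact hn.1 hz'

lemma arc [DecidableEq V] {r : V} {C : G.Walk r r} (hC : C.IsCycle) (c : Sym2 V → ℕ) (k : ℕ)
    (hc : 2 * k - 1 ≤ (C.edges.map c).toFinset.card) {x y : V} (hx : x ∈ C.support)
    (hy : y ∈ C.support) (hxy : x ≠ y) :
    ∃ R : G.Walk x y, R.IsPath ∧ (∀ z ∈ R.support, z ∈ C.support) ∧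
      k ≤ (R.edges.map c).toFinset.card := by
  let D := C.rotate x hx
  have hD : D.IsCycle := hC.rotate hx
  have hs : ∀ z, z ∈ D.support ↔ z ∈ C.support := fun z => Walk.mem_support_rotate_iff C x hx
  have hyD : y ∈ D.support := (hs y).2 hy
  let P := D.takeUntil y hyD
  let Q := D.dropUntil y hyD
  have hPQ : P.append Q = D := D.take_spec hyD
  have hP : P.IsPath := hD.isPath_takeUntil hyD
  have hQ : Q.IsPath := by
    have := hD
    rw [← hPQ] at this
    exact this.isPath_of_append_right (Walk.not_nil_of_ne hxy)
  have hun : (C.edges.map c).toFinset = (P.edges.map c).toFinset ∪ (Q.edges.map c).toFinset := by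
    have he : ∀ e, e ∈ C.edges ↔ e ∈ D.edges := fun e => (C.rotate_edges x hx).mem_iff.symm
    ext a
    simp only [List.mem_toFinset, List.mem_map, Finset.mem_union, he, ← hPQ, Walk.edges_append,
      List.mem_append]
    grind
  have hcard := Finset.card_union_le (P.edges.map c).toFinset (Q.edges.map c).toFinset
  rw [← hun] at hcard
  by_cases hk : k ≤ (P.edges.map c).toFinset.card
  · exact ⟨P, hP, fun z hz => (hs z).1 (D.support_takeUntil_subset_support hyD hz), hk⟩
  · refine ⟨Q.reverse, hQ.reverse, ?_, ?_⟩
    · intro z hz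
      rw [Walk.support_reverse, List.mem_reverse] at hz
      exact (hs z).1 (D.support_dropUntil_subset_support hyD hz)
    · have : (Q.reverse.edges.map c).toFinset = (Q.edges.map c).toFinset := by
        ext; simp
      rw [this]; omega

lemma connecting (hG : ∀ v : V, (G.induce {v}ᶜ).Connected)
    {r : V} {C : G.Walk r r} (hC : C.IsCycle) (c : Sym2 V → ℕ) (k : ℕ)
    (hc : 2 * k - 1 ≤ (C.edges.map c).toFinset.card) : G.IsKColorConnecting k c := by
  classical
  intro u v huv
  let B : Set V := {z | z ∈ C.support}
  have hB : B.Nontrivial := by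
    refine ⟨r, C.start_mem_support, C.snd, ?_, ?_⟩
    · exact List.mem_of_mem_tail (Walk.snd_mem_tail_support hC.not_nil)
    · exact (C.adj_snd hC.not_nil).ne
  obtain ⟨b, hb, hbv⟩ := hB.exists_ne v
  obtain ⟨p, hp⟩ := avoid hG huv hbv
  obtain ⟨x0, hx0, y0, hy0, P0, Q0, -, -, hd0⟩ := link hG B hB v p hb hp
  obtain ⟨x, hx, P, hP, hPs, hPB⟩ := trunc B P0 hx0
  obtain ⟨y, hy, Q, hQ, hQs, hQB⟩ := trunc B Q0 hy0
  have hd : ∀ z ∈ P.support, z ∉ Q.support := fun z hz hz' => hd0 z (hPs z hz) (hQs z hz')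
  have hxy : x ≠ y := by
    rintro rfl; exact hd x P.end_mem_support Q.end_mem_support
  obtain ⟨R, hR, hRs, hk⟩ := arc hC c k hc hx hy hxy
  have h1 : (P.append R).IsPath :=
    isPath_append' hP hR fun z hz hz' => hPB z hz (hRs z hz')
  have h2 : ((P.append R).append Q.reverse).IsPath := by
    refine isPath_append' h1 hQ.reverse fun z hz hz' => ?_
    rw [Walk.support_reverse, List.mem_reverse] at hz'
    rw [Walk.mem_support_append_iff] at hz
    rcases hz with hz | hz
    · exact absurd hz' (hd z hz)
    · exact hQB z hz' (hRs z hz)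
  refine ⟨_, h2, hk.trans (Finset.card_le_card ?_)⟩
  intro a
  simp only [List.mem_toFinset, List.mem_map, Walk.edges_append, List.mem_append]
  grind

lemma exists_coloring {r : V} {C : G.Walk r r} (hC : C.IsCycle) (N : ℕ) (hN : 1 ≤ N)
    (hl : N ≤ C.length) : ∃ c : Sym2 V → ℕ, N ≤ (C.edges.map c).toFinset.card ∧ ∀ e, c e < N := by
  classical
  have hcard : N ≤ C.edges.toFinset.card := by
    rw [List.toFinset_card_of_nodup hC.isTrail.edges_nodup, Walk.length_edges]; exact hl
  obtain ⟨T, hT, hTc⟩ := Finset.exists_subset_card_eq hcard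
  let f := T.equivFinOfCardEq hTc
  refine ⟨fun e => if h : e ∈ T then (f ⟨e, h⟩ : ℕ) else 0, ?_, ?_⟩
  · refine (Finset.card_range N).symm.le.trans (Finset.card_le_card ?_)
    intro i hi
    rw [Finset.mem_range] at hi
    simp only [List.mem_toFinset, List.mem_map]
    refine ⟨(f.symm ⟨i, hi⟩).1, by simpa using hT (f.symm ⟨i, hi⟩).2, ?_⟩
    simp
  · intro e
    dsimp only
    split_ifs
    · exact Fin.is_lt _
    · omega

end EG
theorem stmt_13 {V : Type*} [Fintype V] (G : SimpleGraph V) (k : ℕ) (hk : 2 ≤ k)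
    (hn : 2 * k - 1 ≤ Fintype.card V) (hG : G.IsTwoConnected)
    (hm : (k - 1) * (Fintype.card V - 1) + 1 ≤ G.edgeSet.ncard) :
    G.KColorConnectable k ∧ G.ccConn k ≤ 2 * k - 1 := by
  have hne : Nonempty V := Fintype.card_pos_iff.1 (by omega)
  obtain ⟨r, C, hC, hlen⟩ := EG.exists_cycle G (k - 1) (by omega) hm
  obtain ⟨c, hc, hlt⟩ := EG.exists_coloring hC (2 * k - 1) (by omega) (by omega)
  have hcon := EG.connecting hG.2.2 hC c k hc
  have hle : G.ccConn k ≤ (c '' G.edgeSet).ncard := Nat.sInf_le ⟨c, hcon, rfl⟩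
  refine ⟨⟨c, hcon⟩, hle.trans ?_⟩
  have hsub : c '' G.edgeSet ⊆ (Finset.range (2 * k - 1) : Set ℕ) := by
    rintro _ ⟨e, -, rfl⟩
    simpa using hlt e
  have := Set.ncard_le_ncard hsub (Finset.finite_toSet _)
  rwa [Set.ncard_coe_finset, Finset.card_range] at this
end

section
/- Let k ≥ 2 and let G be a finite 2-connected simple graph of order n ≥ 2k with m edges, where 2m ≥ (2k−1)(n−1) + 2. Then G is k-color connectable and cc_k(G) = k. -/
open SimpleGraph

section EG
set_option linter.unusedSectionVars false
variable {V : Type*} [Fintype V]  [DecidableEq V] (G : SimpleGraph V) [DecidableRel G.Adj]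

/-- list cycle of length > s -/
def LongCyc (s : ℕ) (x : V) (l : List V) (y : V) : Prop :=
  (x :: l ++ [y]).Nodup ∧ (x :: l ++ [y]).IsChain G.Adj ∧ G.Adj y x ∧ s < (x :: l ++ [y]).length

theorem eg_nbr (s : ℕ) (hno : ∀ x l y, ¬ LongCyc G s x l y) (U : Finset V)
    (A' B : List V) (w : V) (hc : (w :: A' ++ B).IsChain G.Adj) (hnd : (w :: A' ++ B).Nodup)
    (hU : ∀ x ∈ w :: A' ++ B, x ∈ U)
    (hmax : ∀ l : List V, l.Nodup → l.IsChain G.Adj → (∀ x ∈ l, x ∈ U) →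
      l.length ≤ (w :: A' ++ B).length)
    (hB : B ≠ [] → (w :: A').length = s) (x : V) (hx : x ∈ U) (hwx : G.Adj w x) : x ∈ A' := by
  by_contra hxA
  have hne : x ≠ w := hwx.ne'
  by_cases hxB : x ∈ B
  · obtain ⟨b1, b2, rfl⟩ := List.append_of_mem hxB
    have hl := hB (by simp)
    refine hno w (A' ++ b1) x ⟨?_, ?_, hwx.symm, ?_⟩
    · refine List.Nodup.sublist ?_ hnd
      simp
    · refine List.IsChain.infix hc ⟨[], b2, by simp⟩
    · simp at hl ⊢; omega
  · have := hmax (x :: (w :: A' ++ B)) (by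
      rw [List.nodup_cons]
      exact ⟨by simp [hne, hxA, hxB], hnd⟩) (by
      simp only [List.cons_append, List.isChain_cons_cons]
      exact ⟨hwx.symm, by simpa using hc⟩) (by
      intro y hy
      rcases List.mem_cons.1 hy with rfl | hy
      · exact hx
      · exact hU y hy)
    simp at this

theorem eg_pred (A' B : List V) (w : V) (hc : (w :: A' ++ B).IsChain G.Adj) 
    (x : V) (hx : x ∈ A') (hwx : G.Adj w x) : ∃ i, ∃ h : i + 1 < (w :: A').length, 
    (w :: A')[i + 1] = x ∧ ∃ A'', ((w::A')[i] :: A'').Perm (w :: A') ∧ 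
      ((w::A')[i] :: A'' ++ B).IsChain G.Adj := by
  obtain ⟨P, Q, rfl⟩ := List.append_of_mem hx
  refine ⟨P.length, by simp, by simp, ?_⟩
  have hlast : (w :: (P ++ x :: Q))[P.length]'(by simp) = (w :: P).getLast (by simp) := by
    rw [List.getLast_eq_getElem]
    have : w :: (P ++ x :: Q) = (w :: P) ++ x :: Q := rfl
    simp only [this]
    rw [List.getElem_append_left]
    simp
    simp
  have hrev : (w :: P).reverse = (w :: P).getLast (by simp) :: (w :: P).dropLast.reverse := by
    conv_lhs => rw [← List.dropLast_append_getLast (l := w :: P) (by simp)]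
    simp only [List.reverse_append, List.reverse_singleton, List.singleton_append]
  refine ⟨(w :: P).dropLast.reverse ++ x :: Q, ?_, ?_⟩
  · rw [hlast, ← List.cons_append, ← hrev]
    exact (List.reverse_perm _).append_right _
  · rw [hlast, ← List.cons_append, ← hrev]
    have hc' : ((w :: P) ++ (x :: (Q ++ B))).IsChain G.Adj := by simpa using hc
    rw [List.append_assoc, List.cons_append, List.isChain_append]
    rw [List.isChain_append] at hc'
    refine ⟨?_, hc'.2.1, ?_⟩
    · rw [List.isChain_reverse]
      exact hc'.1.imp (fun _ _ h => h.symm)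
    · simp [hwx]

theorem eg_main (s : ℕ) (hs : 1 ≤ s) (hno : ∀ x l y, ¬ LongCyc G s x l y) (N : ℕ) :
    ∀ U : Finset V, U.card ≤ N → 
    ∑ u ∈ U, (U.filter (fun v => G.Adj u v)).card ≤ s * (U.card - 1) := by
  induction N with
  | zero => intro U hU; have : U = ∅ := by simpa using hU
            subst this; simp
  | succ N ih =>
    classical
    intro U hUN
    rcases U.eq_empty_or_nonempty with rfl | ⟨u0, hu0⟩
    · simp
    obtain ⟨l, ⟨hnd, hc, hlU⟩, hmax⟩ : ∃ l : List V, (l.Nodup ∧ l.IsChain G.Adj ∧ ∀ x ∈ l, x ∈ U) ∧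
        ∀ l' : List V, l'.Nodup → l'.IsChain G.Adj → (∀ x ∈ l', x ∈ U) → l'.length ≤ l.length := by
      by_contra hcon
      push Not at hcon
      have : ∀ n : ℕ, ∃ l : List V, l.Nodup ∧ l.IsChain G.Adj ∧ (∀ x ∈ l, x ∈ U) ∧ n ≤ l.length := by
        intro n
        induction n with
        | zero => exact ⟨[], by simp⟩
        | succ n ihn =>
          obtain ⟨l, h1, h2, h3, h4⟩ := ihn
          obtain ⟨l', a, b, c, d⟩ := hcon l ⟨h1, h2, h3⟩
          exact ⟨l', a, b, c, by omega⟩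
      obtain ⟨l, h1, h2, h3, h4⟩ := this (U.card + 1)
      have := Finset.card_le_card (s := l.toFinset) (t := U) (fun x hx => h3 x (by simpa using hx))
      rw [List.toFinset_card_of_nodup h1] at this
      omega
    have hlne : 1 ≤ l.length := by
      have := hmax [u0] (by simp) (by simp) (by simpa using hu0)
      simpa using this
    set A0 := l.take s with hA0
    set B := l.drop s with hBdef
    have hAB : A0 ++ B = l := List.take_append_drop _ _
    set R := U.filter (fun w => ∃ A', (w :: A').Perm A0 ∧ (w :: A' ++ B).IsChain G.Adj) with hR
    have hperm : ∀ w A', (w :: A').Perm A0 → (w :: A' ++ B).Perm l := by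
      intro w A' h; rw [← hAB]; exact h.append_right _
    have hA0len : A0.length ≤ s := by simp [hA0]
    have hnbr : ∀ w A', (w :: A').Perm A0 → (w :: A' ++ B).IsChain G.Adj → 
        ∀ x ∈ U, G.Adj w x → x ∈ A' := by
      intro w A' hp hch x hx hwx
      have hp' := hperm w A' hp
      refine eg_nbr G s hno U A' B w hch (hp'.nodup_iff.2 hnd) (fun y hy => hlU y (hp'.mem_iff.1 hy))
        (by rw [hp'.length_eq]; exact hmax) ?_ x hx hwx
      intro hB
      rw [hp.length_eq, hA0, List.length_take]
      have : s < l.length := by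
        by_contra h
        exact hB (by rw [hBdef]; exact List.drop_eq_nil_of_le (by omega))
      omega
    have hRA : R ⊆ A0.toFinset := by
      intro w hw
      obtain ⟨_, A', hp, _⟩ := Finset.mem_filter.1 hw
      simpa using hp.mem_iff.1 (by simp : w ∈ w :: A')
    have hA0U : ∀ x ∈ A0, x ∈ U := fun x hx => hlU x (by rw [← hAB]; simp [hx])
    have hRne : R.Nonempty := by
      cases hA : A0 with
      | nil => 
        have := congrArg List.length hA
        simp [hA0] at this
        rcases this with h | h
        · omega
        · simp [h] at hlne
      | cons a A' => 
        refine ⟨a, Finset.mem_filter.2 ⟨hA0U a (by simp [hA]), A', by rw [hA], ?_⟩⟩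
        rw [← hA, hAB]; exact hc
    have hdR : ∀ w ∈ R, (U.filter (fun v => G.Adj w v)).card ≤ R.card := by
      intro w hw
      obtain ⟨_, A', hp, hch⟩ := Finset.mem_filter.1 hw
      have hndw : (w :: A').Nodup := hp.nodup_iff.2 (by 
        rw [← hAB] at hnd; exact hnd.of_append_left)
      have key : ∀ x ∈ U.filter (fun v => G.Adj w v), ∃ y ∈ R, ∃ i, ∃ h : i + 1 < (w :: A').length,
          (w :: A')[i + 1] = x ∧ (w :: A')[i] = y := by
        intro x hx
        obtain ⟨hxU, hwx⟩ := Finset.mem_filter.1 hx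
        obtain ⟨i, h, hix, A'', hp2, hc2⟩ := eg_pred G A' B w hch x (hnbr w A' hp hch x hxU hwx) hwx
        refine ⟨_, Finset.mem_filter.2 ⟨?_, A'', hp2.trans hp, hc2⟩, i, h, hix, rfl⟩
        exact hA0U _ (hp.mem_iff.1 (List.getElem_mem _))
      choose! f hfR hf using key
      refine Finset.card_le_card_of_injOn f (fun x hx => hfR x hx) ?_
      intro x hx x' hx' hxx
      obtain ⟨i, h, h1, h2⟩ := hf x hx
      obtain ⟨j, h', h1', h2'⟩ := hf x' hx'
      have : i = j := by
        have := h2.trans (hxx.trans h2'.symm)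
        exact (hndw.getElem_inj_iff).1 this
      subst this
      exact h1.symm.trans h1'
    have hRU : R ⊆ U := Finset.filter_subset _ _
    have hcA : A0.toFinset.card ≤ s := (List.toFinset_card_le _).trans hA0len
    have hdout : ∀ w ∈ R, ((U \ R).filter (fun v => G.Adj w v)).card ≤ s - R.card := by
      intro w hw
      obtain ⟨_, A', hp, hch⟩ := Finset.mem_filter.1 hw
      have : (U \ R).filter (fun v => G.Adj w v) ⊆ A0.toFinset \ R := by
        intro x hx
        simp only [Finset.mem_filter, Finset.mem_sdiff] at hx ⊢
        refine ⟨?_, hx.1.2⟩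
        have := hnbr w A' hp hch x hx.1.1 hx.2
        simpa using hp.mem_iff.1 (List.mem_cons_of_mem _ this)
      refine (Finset.card_le_card this).trans ?_
      rw [Finset.card_sdiff_of_subset hRA]
      omega
    have hRs : R.card ≤ s := (Finset.card_le_card hRA).trans hcA
    have hRpos := hRne.card_pos
    have hRUc := Finset.card_le_card hRU
    by_cases hfull : R.card = U.card
    · calc _ ≤ ∑ u ∈ U, (U.card - 1) := by
            refine Finset.sum_le_sum fun u hu => ?_
            rw [← Finset.card_erase_of_mem hu]
            refine Finset.card_le_card fun x hx => ?_
            simp only [Finset.mem_filter, Finset.mem_erase] at hx ⊢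
            exact ⟨hx.2.ne', hx.1⟩
        _ = U.card * (U.card - 1) := by simp
        _ ≤ _ := Nat.mul_le_mul_right _ (by omega)
    have hcardUR : (U \ R).card = U.card - R.card := Finset.card_sdiff_of_subset hRU
    have IH := ih (U \ R) (by omega)
    have split : ∀ u, (U.filter (fun v => G.Adj u v)).card = 
        ((U \ R).filter (fun v => G.Adj u v)).card + (R.filter (fun v => G.Adj u v)).card := by
      intro u
      rw [← Finset.card_union_of_disjoint]
      · rw [← Finset.filter_union, Finset.sdiff_union_of_subset hRU]
      · exact Finset.disjoint_filter_filter Finset.sdiff_disjoint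
    have dbl : ∑ u ∈ U \ R, (R.filter (fun v => G.Adj u v)).card = 
        ∑ u ∈ R, ((U \ R).filter (fun v => G.Adj u v)).card := by
      have := Finset.sum_card_bipartiteAbove_eq_sum_card_bipartiteBelow (s := U \ R) (t := R) (fun a b => G.Adj a b)
      simp only [Finset.bipartiteAbove, Finset.bipartiteBelow] at this
      rw [this]
      simp only [G.adj_comm]
    have e1 : ∑ u ∈ U, (U.filter (fun v => G.Adj u v)).card = 
       ∑ u ∈ U \ R, ((U \ R).filter (fun v => G.Adj u v)).card + 
       ∑ u ∈ R, (((U \ R).filter (fun v => G.Adj u v)).card + (U.filter (fun v => G.Adj u v)).card) := by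
      rw [← Finset.sum_sdiff hRU, Finset.sum_congr rfl (fun u _ => split u), 
        Finset.sum_add_distrib, dbl, Finset.sum_add_distrib, add_assoc]
    have e2 : ∑ u ∈ R, (((U \ R).filter (fun v => G.Adj u v)).card + (U.filter (fun v => G.Adj u v)).card)
        ≤ ∑ u ∈ R, s := by
      refine Finset.sum_le_sum fun u hu => ?_
      have := hdR u hu
      have := hdout u hu
      omega
    rw [e1]
    simp only [Finset.sum_const, smul_eq_mul] at e2
    rw [hcardUR] at IH
    calc _ ≤ s * (U.card - R.card - 1) + R.card * s := Nat.add_le_add IH e2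
      _ = s * (U.card - 1) := by
        rw [mul_comm R.card s, ← mul_add]
        congr 1; omega

end EG

section Ear
variable {V : Type*} (G : SimpleGraph V)

/-- `l` is a path list from `u` to `v` inside `H` using all colors below `k`. -/
def PL (c : Sym2 V → ℕ) (k : ℕ) (H : Set V) (u v : V) (l : List V) : Prop :=
  l.IsChain G.Adj ∧ l.Nodup ∧ l.head? = some u ∧ l.getLast? = some v ∧ (∀ x ∈ l, x ∈ H) ∧
    ∀ a < k, ∃ x y, [x, y] <:+: l ∧ c s(x, y) = a

variable {G} {c : Sym2 V → ℕ} {k : ℕ}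

theorem PL.symm {H : Set V} {u v : V} {l : List V} (h : PL G c k H u v l) :
    PL G c k H v u l.reverse := by
  obtain ⟨h1, h2, h3, h4, h5, h6⟩ := h
  refine ⟨?_, by simpa using h2, by simpa using h4, by simpa using h3, by simpa using h5, ?_⟩
  · rw [List.isChain_reverse]
    exact h1.imp (fun _ _ h => h.symm)
  · intro a ha
    obtain ⟨x, y, hi, hc⟩ := h6 a ha
    refine ⟨y, x, ?_, by rw [Sym2.eq_swap]; exact hc⟩
    have := List.reverse_infix.2 hi
    simpa using this

theorem PL.mono {H H' : Set V} {u v : V} {l : List V} (h : PL G c k H u v l) (hs : H ⊆ H') :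
    PL G c k H' u v l := 
  ⟨h.1, h.2.1, h.2.2.1, h.2.2.2.1, fun x hx => hs (h.2.2.2.2.1 x hx), h.2.2.2.2.2⟩

theorem PL.extend {H : Set V} {u v z : V} {l Y : List V} (h : PL G c k H u v l) 
    (hc : (v :: (Y ++ [z])).IsChain G.Adj) (hnd : (Y ++ [z]).Nodup) (hd : ∀ x ∈ Y ++ [z], x ∉ H) :
    PL G c k (H ∪ {x | x ∈ Y ++ [z]}) u z (l ++ (Y ++ [z])) := by
  obtain ⟨h1, h2, h3, h4, h5, h6⟩ := h
  refine ⟨?_, ?_, ?_, ?_, ?_, ?_⟩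
  · rw [List.isChain_append]
    rw [List.isChain_cons] at hc
    refine ⟨h1, hc.2, ?_⟩
    intro x hx y hy
    rw [h4] at hx
    obtain rfl : v = x := by simpa using hx
    exact hc.1 y hy
  · rw [List.nodup_append]
    refine ⟨h2, hnd, ?_⟩
    rintro a ha b hb rfl
    exact hd a hb (h5 a ha)
  · simp [List.head?_append, h3]
  · simp [List.getLast?_append]
  · intro x hx
    rcases List.mem_append.1 hx with hx | hx
    · exact Or.inl (h5 x hx)
    · exact Or.inr hx
  · intro a ha
    obtain ⟨x, y, hi, hc⟩ := h6 a ha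
    exact ⟨x, y, hi.trans (List.prefix_append _ _).isInfix, hc⟩

variable (G c k) in
/-- all pairs of `H` are joined inside `H`. -/
def TT (H : Set V) : Prop := ∀ u ∈ H, ∀ v ∈ H, u ≠ v → ∃ l, PL G c k H u v l

theorem chain_rev {l : List V} (h : l.IsChain G.Adj) : l.reverse.IsChain G.Adj := by
  rw [List.isChain_reverse]
  exact h.imp (fun _ _ h => h.symm)

theorem ear_both {H : Set V} (hT : TT G c k H) {h h' : V} (hh : h ∈ H) (hh' : h' ∈ H) (hne : h ≠ h')
    {X Y Z : List V} {u v : V} (hc : (h :: (X ++ u :: Y ++ v :: Z) ++ [h']).IsChain G.Adj)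
    (hnd : (X ++ u :: Y ++ v :: Z).Nodup) (hd : ∀ x ∈ X ++ u :: Y ++ v :: Z, x ∉ H) :
    ∃ l, PL G c k (H ∪ {x | x ∈ X ++ u :: Y ++ v :: Z}) u v l := by
  obtain ⟨l, hl⟩ := hT h hh h' hh' hne
  have e1 := hl.extend (Y := Z.reverse) (z := v) (by
      have : (v :: Z ++ [h']).IsChain G.Adj := hc.infix ⟨h :: (X ++ u :: Y), [], by simp⟩
      simpa using chain_rev this) (by
      have : (v :: Z).Nodup := hnd.of_append_right
      simpa using List.nodup_reverse.2 this) (by 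
      intro x hx; apply hd; simp at hx ⊢; tauto)
  have e2 := e1.symm.extend (Y := X) (z := u) (hc.infix ⟨[], Y ++ v :: Z ++ [h'], by simp⟩)
    (hnd.sublist (by simp)) (by
      intro x hx
      rintro (hxH | hx2)
      · refine hd x ?_ hxH
        simp at hx ⊢; tauto
      · have hnd' : ((X ++ [u]) ++ (Y ++ (v :: Z))).Nodup := by simpa using hnd
        refine List.disjoint_of_nodup_append hnd' hx ?_
        simp at hx2 ⊢; tauto)
  refine ⟨_, e2.symm.mono ?_⟩
  intro x hx
  simp at hx ⊢; tauto

theorem ear_one {H : Set V} (hT : TT G c k H) {h h' : V} (hh : h ∈ H) (hh' : h' ∈ H) (hne : h ≠ h')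
    {W : List V} (hc : (h :: W ++ [h']).IsChain G.Adj)
    (hnd : W.Nodup) (hd : ∀ x ∈ W, x ∉ H) {u v : V} (hu : u ∈ H) (hv : v ∈ W) :
    ∃ l, PL G c k (H ∪ {x | x ∈ W}) u v l := by
  obtain ⟨X, Y, rfl⟩ := List.append_of_mem hv
  by_cases huh : u = h
  · subst huh
    obtain ⟨l, hl⟩ := hT u hu h' hh' hne
    have e1 := hl.extend (Y := Y.reverse) (z := v) (by
      have : (v :: Y ++ [h']).IsChain G.Adj := hc.infix ⟨u :: X, [], by simp⟩
      simpa using chain_rev this) (by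
      have : (v :: Y).Nodup := hnd.sublist (by simp)
      simpa using List.nodup_reverse.2 this) (by 
      intro x hx; apply hd; simp at hx ⊢; tauto)
    refine ⟨_, e1.mono ?_⟩
    intro x hx
    simp at hx ⊢; tauto
  · obtain ⟨l, hl⟩ := hT u hu h hh huh
    have e1 := hl.extend (Y := X) (z := v) (hc.infix ⟨[], Y ++ [h'], by simp⟩)
      (hnd.sublist (by simp)) (by 
      intro x hx; apply hd; simp at hx ⊢; tauto)
    refine ⟨_, e1.mono ?_⟩
    intro x hx
    simp at hx ⊢; tauto

theorem ear_ext {H : Set V} (hT : TT G c k H) {h h' : V} (hh : h ∈ H) (hh' : h' ∈ H) (hne : h ≠ h')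
    {W : List V} (hc : (h :: W ++ [h']).IsChain G.Adj)
    (hnd : W.Nodup) (hd : ∀ x ∈ W, x ∉ H) : TT G c k (H ∪ {x | x ∈ W}) := by
  intro u hu v hv huv
  rcases hu with hu | hu <;> rcases hv with hv | hv
  · obtain ⟨l, hl⟩ := hT u hu v hv huv
    exact ⟨l, hl.mono Set.subset_union_left⟩
  · exact ear_one hT hh hh' hne hc hnd hd hu hv
  · obtain ⟨l, hl⟩ := ear_one hT hh hh' hne hc hnd hd hv hu
    exact ⟨_, hl.symm⟩
  · obtain ⟨X, Y, rfl⟩ := List.append_of_mem (show u ∈ W from hu)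
    have hv' : v ∈ X ∨ v = u ∨ v ∈ Y := by simpa using hv
    rcases hv' with hv' | rfl | hv'
    · obtain ⟨X, Z, rfl⟩ := List.append_of_mem hv'
      obtain ⟨l, hl⟩ := ear_both hT hh hh' hne hc hnd hd
      exact ⟨_, hl.symm⟩
    · exact absurd rfl huv
    · obtain ⟨Y, Z, rfl⟩ := List.append_of_mem hv'
      have e : X ++ u :: (Y ++ v :: Z) = X ++ u :: Y ++ v :: Z := by simp
      rw [e] at hc hnd hd ⊢
      exact ear_both hT hh hh' hne hc hnd hd

theorem list_first (H : Set V) (l : List V) : (∃ x ∈ l, x ∈ H) → 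
    ∃ W h' Z, l = W ++ h' :: Z ∧ h' ∈ H ∧ ∀ x ∈ W, x ∉ H := by
  induction l with
  | nil => rintro ⟨x, hx, _⟩; simp at hx
  | cons a l ih =>
    rintro ⟨x, hx, hxH⟩
    by_cases ha : a ∈ H
    · exact ⟨[], a, l, rfl, ha, by simp⟩
    · have hx' : x ∈ l := by
        rcases List.mem_cons.1 hx with rfl | hx
        · exact absurd hxH ha
        · exact hx
      obtain ⟨W, h', Z, e, h1, h2⟩ := ih ⟨x, hx', hxH⟩
      refine ⟨a :: W, h', Z, by simp [e], h1, ?_⟩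
      intro y hy
      rcases List.mem_cons.1 hy with rfl | hy
      · exact ha
      · exact h2 y hy

theorem ear_exists (hG : G.IsTwoConnected) {H : Set V} {a b : V} (ha : a ∈ H) (hb : b ∈ H) (hab : a ≠ b)
    (hH : H ≠ Set.univ) : ∃ h ∈ H, ∃ h' ∈ H, h ≠ h' ∧ ∃ W : List V, W ≠ [] ∧ 
      (h :: W ++ [h']).IsChain G.Adj ∧ W.Nodup ∧ ∀ x ∈ W, x ∉ H := by
  classical
  obtain ⟨z, hz⟩ := (Set.ne_univ_iff_exists_notMem H).1 hH
  obtain ⟨p⟩ := hG.2.1.preconnected a z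
  obtain ⟨d, -, hd1, hd2⟩ := p.exists_boundary_dart H ha hz
  obtain ⟨h2, hh2, hne⟩ : ∃ h2 ∈ H, h2 ≠ d.fst := by
    by_cases h : a = d.fst
    · exact ⟨b, hb, fun h' => hab (h.trans h'.symm)⟩
    · exact ⟨a, ha, h⟩
  have hwne : d.snd ≠ d.fst := d.adj.ne'
  obtain ⟨q, hq⟩ := (hG.2.2 d.fst).exists_isPath ⟨d.snd, hwne⟩ ⟨h2, hne⟩
  have hch : (q.support.map Subtype.val).IsChain G.Adj := by
    rw [List.isChain_map]
    exact q.isChain_adj_support.imp (fun _ _ h => h)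
  have hnd : (q.support.map Subtype.val).Nodup := 
    List.Nodup.map Subtype.val_injective hq.support_nodup
  have hav : ∀ x ∈ q.support.map Subtype.val, x ≠ d.fst := by
    intro x hx
    obtain ⟨y, _, rfl⟩ := List.mem_map.1 hx
    exact y.2
  obtain ⟨W, h', Z, e, h1, hW⟩ := list_first H (q.support.map Subtype.val) 
    ⟨h2, List.mem_map.2 ⟨_, q.end_mem_support, rfl⟩, hh2⟩
  have hhead : (q.support.map Subtype.val).head? = some d.snd := by
    rw [← Walk.cons_tail_support, List.map_cons, List.head?_cons]
  rw [e] at hch hnd hav hhead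
  cases W with
  | nil => 
    exfalso
    simp at hhead
    subst hhead
    exact hd2 h1
  | cons w W =>
    simp at hhead
    subst hhead
    refine ⟨d.fst, hd1, h', h1, (hav h' (by simp)).symm, _, by simp, ?_, hnd.of_append_left, hW⟩
    have : (d.snd :: W ++ [h']).IsChain G.Adj := hch.infix ⟨[], Z, by simp⟩
    simp only [List.cons_append, List.isChain_cons_cons] at this ⊢
    exact ⟨d.adj, this⟩

theorem TT_univ [Finite V] (hG : G.IsTwoConnected) {H : Set V} {a b : V} (ha : a ∈ H) (hb : b ∈ H) (hab : a ≠ b)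
    (hT : TT G c k H) : TT G c k Set.univ := by
  obtain ⟨M, ⟨hM1, hM2⟩, hM3⟩ := 
    (Set.toFinite {M : Set V | H ⊆ M ∧ TT G c k M}).exists_maximal ⟨H, subset_rfl, hT⟩
  by_cases hMu : M = Set.univ
  · rwa [hMu] at hM2
  exfalso
  obtain ⟨h, hh, h', hh', hne, W, hW, hc, hnd, hd⟩ := ear_exists hG (hM1 ha) (hM1 hb) hab hMu
  have := hM3 ⟨hM1.trans Set.subset_union_left, ear_ext hM2 hh hh' hne hc hnd hd⟩ Set.subset_union_left
  obtain ⟨w, W', rfl⟩ := List.exists_cons_of_ne_nil hW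
  exact hd w (by simp) (this (Or.inr (by simp)))

theorem infix_get (l : List V) (t : ℕ) (h : t + 1 < l.length) : [l[t], l[t+1]] <:+: l := by
  refine ⟨l.take t, l.drop (t + 2), ?_⟩
  conv_rhs => rw [← List.take_append_drop t l]
  rw [List.drop_eq_getElem_cons (i := t) (by omega), List.drop_eq_getElem_cons (i := t + 1) h]
  simp

theorem infix_junction (A B : List V) (x y : V) (hx : A.getLast? = some x) (hy : B.head? = some y) : 
    [x, y] <:+: A ++ B := by
  obtain ⟨A', rfl⟩ := List.getLast?_eq_some_iff.1 hx
  obtain ⟨B', rfl⟩ := List.head?_eq_some_iff.1 hy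
  exact ⟨A', B', by simp⟩

theorem cyc_color (k : ℕ) (hk : 2 ≤ k) (L : List V) (hnd : L.Nodup) (hl : 2 * k ≤ L.length) :
    ∃ c : Sym2 V → ℕ, (∀ e, c e < k) ∧ (∀ t (h : t + 1 < L.length), c s(L[t], L[t+1]) = t % k) ∧
      c s(L[L.length - 1], L[0]) = (L.length - 1) % k := by
  let F : Fin L.length → Sym2 V := fun t => s(L[t.1], L[(t.1 + 1) % L.length]'(Nat.mod_lt _ (by omega)))
  have hmod : ∀ t, t < L.length → (t + 1) % L.length = if t + 1 = L.length then 0 else t + 1 := by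
    intro t ht
    split_ifs with h
    · rw [h]; simp
    · exact Nat.mod_eq_of_lt (by omega)
  have hF : Function.Injective F := by
    rintro ⟨t, ht⟩ ⟨t', ht'⟩ h
    simp only [F, Sym2.eq_iff, hnd.getElem_inj_iff, hmod t ht, hmod t' ht'] at h
    simp only [Fin.mk.injEq]
    split_ifs at h <;> omega
  refine ⟨Function.extend F (fun t => t.1 % k) 0, ?_, ?_, ?_⟩
  · intro e
    by_cases h : ∃ t, F t = e
    · obtain ⟨t, rfl⟩ := h
      rw [hF.extend_apply]
      exact Nat.mod_lt _ (by omega)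
    · rw [Function.extend_apply' _ _ _ h]
      simp; omega
  · intro t h
    have := hF.extend_apply (fun t => t.1 % k) 0 ⟨t, by omega⟩
    simpa [F, Nat.mod_eq_of_lt h] using this
  · have := hF.extend_apply (fun t => t.1 % k) 0 ⟨L.length - 1, by omega⟩
    simpa [F, Nat.sub_add_cancel (show 1 ≤ L.length by omega)] using this

theorem cyc_aux (k : ℕ) (hk : 2 ≤ k) (L : List V) (hnd : L.Nodup) (hl : 2 * k ≤ L.length)
    (hch : L.IsChain G.Adj) (hadj : G.Adj L[L.length - 1] L[0]) 
    (h1 : ∀ t (h : t + 1 < L.length), c s(L[t], L[t+1]) = t % k)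
    (h2 : c s(L[L.length - 1], L[0]) = (L.length - 1) % k) 
    (i j : ℕ) (hij : i < j) (hj : j < L.length) : ∃ l, PL G c k {x | x ∈ L} L[i] L[j] l := by
  have hdich : (∀ a < k, ∃ t, i ≤ t ∧ t < j ∧ t % k = a) ∨ 
      (∀ a < k, ∃ t, (t < i ∨ (j ≤ t ∧ t < L.length)) ∧ t % k = a) := by
    by_contra hcon
    push Not at hcon
    obtain ⟨⟨a, ha, ha'⟩, ⟨b, hb, hb'⟩⟩ := hcon
    have m : ∀ a < k, a % k = a ∧ (a + k) % k = a := fun a ha => 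
      ⟨Nat.mod_eq_of_lt ha, by simp [Nat.mod_eq_of_lt ha]⟩
    have a1 := ha' a
    have a2 := ha' (a + k)
    have b1 := hb' b
    have b2 := hb' (b + k)
    rw [(m a ha).1] at a1
    rw [(m a ha).2] at a2
    rw [(m b hb).1] at b1
    rw [(m b hb).2] at b2
    simp only [ne_eq, not_true_eq_false, imp_false] at a1 a2 b1 b2
    omega
  rcases hdich with hd | hd
  · refine ⟨(L.take (j + 1)).drop i, ?_, ?_, ?_, ?_, ?_, ?_⟩
    · exact hch.infix ((List.drop_suffix _ _).isInfix.trans (List.take_prefix _ _).isInfix)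
    · exact hnd.sublist ((List.drop_sublist _ _).trans (List.take_sublist _ _))
    · rw [List.head?_drop, List.getElem?_take]
      simp [show i < j + 1 by omega]
    · rw [List.getLast?_eq_getElem?]
      simp only [List.getElem?_drop, List.getElem?_take, List.length_drop, List.length_take]
      rw [show i + (min (j + 1) L.length - i - 1) = j by omega]
      simp [hj]
    · intro x hx
      exact List.mem_of_mem_take (List.mem_of_mem_drop hx)
    · intro a ha
      obtain ⟨t, ht1, ht2, rfl⟩ := hd a ha
      refine ⟨L[t], L[t+1], ?_, h1 t (by omega)⟩
      have := infix_get ((L.take (j + 1)).drop i) (t - i) (by simp; omega)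
      simpa [show i + (t - i) = t by omega, show i + (t - i + 1) = t + 1 by omega] using this
  · have hlast : (L.drop j).getLast? = some L[L.length - 1] := by
      rw [List.getLast?_drop, List.getLast?_eq_getElem?]
      simp; omega
    have hhead : (L.take (i + 1)).head? = some L[0] := by
      simp [List.head?_eq_getElem?]
    have key : PL G c k {x | x ∈ L} L[j] L[i] (L.drop j ++ L.take (i + 1)) := by
      refine ⟨?_, ?_, ?_, ?_, ?_, ?_⟩
      · rw [List.isChain_append]
        refine ⟨hch.infix (List.drop_suffix _ _).isInfix, hch.infix (List.take_prefix _ _).isInfix, ?_⟩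
        intro x hx y hy
        rw [hlast] at hx
        rw [hhead] at hy
        simp at hx hy
        rw [← hx, ← hy]; exact hadj
      · refine List.Nodup.append (hnd.sublist (List.drop_sublist _ _)) (hnd.sublist (List.take_sublist _ _)) ?_
        intro x hx hx'
        obtain ⟨s, hs, rfl⟩ := List.mem_iff_getElem.1 hx
        obtain ⟨s', hs', e⟩ := List.mem_iff_getElem.1 hx'
        simp only [List.getElem_drop, List.getElem_take, hnd.getElem_inj_iff] at e
        simp at hs'
        omega
      · rw [List.head?_append, List.head?_drop]
        simp [hj]
      · rw [List.getLast?_append, List.getLast?_eq_getElem?]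
        simp only [List.getElem?_take, List.length_take]
        rw [show min (i + 1) L.length - 1 = i by omega]
        simp [show i < L.length by omega]
      · intro x hx
        rcases List.mem_append.1 hx with hx | hx
        · exact List.mem_of_mem_drop hx
        · exact List.mem_of_mem_take hx
      · intro a ha
        obtain ⟨t, ht, rfl⟩ := hd a ha
        by_cases ht0 : t = L.length - 1
        · subst ht0
          exact ⟨_, _, infix_junction _ _ _ _ hlast hhead, h2⟩
        · refine ⟨L[t]'(by omega), L[t+1]'(by omega), ?_, h1 t (by omega)⟩
          rcases ht with ht | ⟨ht, ht'⟩
          · refine List.IsInfix.trans ?_ (List.suffix_append _ _).isInfix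
            have := infix_get (L.take (i + 1)) t (by simp; omega)
            simpa using this
          · refine List.IsInfix.trans ?_ (List.prefix_append _ _).isInfix
            have := infix_get (L.drop j) (t - j) (by simp; omega)
            simpa [show j + (t - j) = t by omega, show j + (t - j + 1) = t + 1 by omega] using this
    exact ⟨_, key.symm⟩

theorem cyc_TT (k : ℕ) (hk : 2 ≤ k) (L : List V) (hnd : L.Nodup) (hl : 2 * k ≤ L.length)
    (hch : L.IsChain G.Adj) (hadj : G.Adj L[L.length - 1] L[0]) 
    (h1 : ∀ t (h : t + 1 < L.length), c s(L[t], L[t+1]) = t % k)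
    (h2 : c s(L[L.length - 1], L[0]) = (L.length - 1) % k) : TT G c k {x | x ∈ L} := by
  intro u hu v hv huv
  obtain ⟨i, hi, rfl⟩ := List.mem_iff_getElem.1 hu
  obtain ⟨j, hj, rfl⟩ := List.mem_iff_getElem.1 hv
  rcases lt_trichotomy i j with h | h | h
  · exact cyc_aux k hk L hnd hl hch hadj h1 h2 i j h hj
  · subst h; exact absurd rfl huv
  · obtain ⟨l, hl⟩ := cyc_aux k hk L hnd hl hch hadj h1 h2 j i h hi
    exact ⟨_, hl.symm⟩

theorem mem_edges_of_infix {u v : V} (p : G.Walk u v) {x y : V} (h : [x, y] <:+: p.support) : 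
    s(x, y) ∈ p.edges :=
  Walk.infix_support_iff_mem_edges.1 (Or.inl h)

theorem TT_conn (h : TT G c k Set.univ) : G.IsKColorConnecting k c := by
  intro u v huv
  obtain ⟨l, h1, h2, h3, h4, -, h6⟩ := h u trivial v trivial huv
  have hne : l ≠ [] := by rintro rfl; simp at h3
  have hu : l.head hne = u := by
    rw [List.head?_eq_some_head hne] at h3; simpa using h3
  have hv : l.getLast hne = v := by
    rw [List.getLast?_eq_some_getLast hne] at h4; simpa using h4
  subst hu hv
  refine ⟨Walk.ofSupport l hne h1, ?_, ?_⟩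
  · rw [Walk.isPath_def, Walk.support_ofSupport]; exact h2
  · have : Finset.range k ⊆ ((Walk.ofSupport l hne h1).edges.map c).toFinset := by
      intro a ha
      obtain ⟨x, y, hi, hc⟩ := h6 a (by simpa using ha)
      rw [List.mem_toFinset, List.mem_map]
      exact ⟨_, mem_edges_of_infix _ (by rw [Walk.support_ofSupport]; exact hi), hc⟩
    simpa using Finset.card_le_card this

end Ear

theorem stmt_14 {V : Type*} [Fintype V] (G : SimpleGraph V) (k : ℕ) (hk : 2 ≤ k)
    (hn : 2 * k ≤ Fintype.card V) (hG : G.IsTwoConnected)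
    (hm : (2 * k - 1) * (Fintype.card V - 1) + 2 ≤ 2 * G.edgeSet.ncard) :
    G.KColorConnectable k ∧ G.ccConn k = k := by
  classical
  obtain ⟨x, l, y, hnd, hch, hadj, hlen⟩ : ∃ x l y, LongCyc G (2 * k - 1) x l y := by
    by_contra hcon
    push Not at hcon
    have h1 := eg_main G (2 * k - 1) (by omega) hcon _ Finset.univ le_rfl
    have h2 := G.sum_degrees_eq_twice_card_edges
    have h3 : G.edgeSet.ncard = G.edgeFinset.card := by
      rw [← Set.ncard_coe_finset, coe_edgeFinset]
    simp only [← card_neighborFinset_eq_degree, neighborFinset_eq_filter] at h2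
    rw [Finset.card_univ] at h1
    omega
  set L := x :: l ++ [y] with hL
  have hl : 2 * k ≤ L.length := by omega
  have hlast : L[L.length - 1] = y := by simp [hL]
  have hhead : L[0] = x := by simp [hL]
  obtain ⟨c, hck, h1, h2⟩ := cyc_color k hk L hnd hl
  have hT : TT G c k {x | x ∈ L} :=
    cyc_TT k hk L hnd hl hch (by rw [hlast, hhead]; exact hadj) h1 h2
  have hcon : G.IsKColorConnecting k c :=
    TT_conn (TT_univ hG (a := y) (b := x) (by simp [hL]) (by simp [hL]) hadj.ne hT)
  have lower : ∀ c' : Sym2 V → ℕ, G.IsKColorConnecting k c' → k ≤ (c' '' G.edgeSet).ncard := by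
    intro c' hc'
    obtain ⟨p, -, hp⟩ := hc' y x hadj.ne
    refine hp.trans ?_
    rw [← Set.ncard_coe_finset]
    refine Set.ncard_le_ncard ?_ (Set.toFinite _)
    intro a ha
    simp only [List.coe_toFinset, List.mem_map, Set.mem_ofPred_eq] at ha
    obtain ⟨e, he, rfl⟩ := ha
    exact ⟨e, p.edges_subset_edgeSet he, rfl⟩
  refine ⟨⟨c, hcon⟩, ?_⟩
  apply le_antisymm
  · refine Nat.sInf_le ⟨c, hcon, le_antisymm ?_ (lower c hcon)⟩
    calc _ ≤ ((Finset.range k : Finset ℕ) : Set ℕ).ncard := by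
          refine Set.ncard_le_ncard ?_ (Finset.finite_toSet _)
          rintro a ⟨e, -, rfl⟩
          simpa using hck e
      _ = k := by rw [Set.ncard_coe_finset, Finset.card_range]
  · refine le_csInf ⟨_, c, hcon, rfl⟩ ?_
    rintro n ⟨c', hc', rfl⟩
    exact lower c' hc'
end

section
/- Let k ≥ 2 and let G = Q_{q_1,q_2,…,q_t} be a generalised θ-graph with q_1 + q_2 ≤ 2k − 2. Then G is not k-color connectable, i.e., no edge-coloring of G makes G k-color connected. -/
open SimpleGraph

/-- `G` is a generalised θ-graph with `t` paths, the `i`-th of length `q i`: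
`G` is the union of `t` pairwise internally vertex-disjoint paths sharing the same two
end-vertices `x ≠ y`, and `G` has no further vertices or edges. -/
inductive SimpleGraph.IsGenTheta {V : Type*} (G : SimpleGraph V) (t : ℕ)
    (q : Fin t → ℕ) : Prop
  | mk (x y : V) (hxy : x ≠ y) (p : ∀ _ : Fin t, G.Walk x y)
      (hpath : ∀ i, (p i).IsPath) (hlen : ∀ i, (p i).length = q i)
      (hdisj : ∀ i j, i ≠ j → ∀ w, w ∈ (p i).support → w ∈ (p j).support → w = x ∨ w = y)
      (hverts : ∀ w : V, ∃ i, w ∈ (p i).support)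
      (hedges : ∀ e : Sym2 V, e ∈ G.edgeSet ↔ ∃ i, e ∈ (p i).edges) :
      IsGenTheta G t q

/-- Two indices of a path with the same vertex agree. -/
lemma theta_inj {V : Type*} {G : SimpleGraph V} {x y : V} {Q : G.Walk x y} (hQ : Q.IsPath)
    {a b : ℕ} (ha : a ≤ Q.length) (hb : b ≤ Q.length) (h : Q.getVert a = Q.getVert b) : a = b :=
  hQ.getVert_injOn ha hb h

/-- The other end of an edge of a path at the vertex with index `a`. -/
lemma theta_nbr {V : Type*} {G : SimpleGraph V} {x y : V} {Q : G.Walk x y} (hQ : Q.IsPath)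
    {a : ℕ} (ha : a ≤ Q.length) {z : V} (h : s(Q.getVert a, z) ∈ Q.edges) :
    (0 < a ∧ z = Q.getVert (a - 1)) ∨ (a < Q.length ∧ z = Q.getVert (a + 1)) := by
  rw [Walk.mk_mem_edges_iff_exists] at h
  obtain ⟨i, hi, h⟩ := h
  rw [Sym2.eq_iff] at h
  rcases h with ⟨h1, h2⟩ | ⟨h1, h2⟩
  · have := theta_inj hQ (by omega) ha h1
    subst this
    exact Or.inr ⟨hi, h2.symm⟩
  · have := theta_inj hQ (by omega) ha h2
    subst this
    exact Or.inl ⟨by omega, by simpa using h1.symm⟩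

/-- A path entering the path `Q` at index `a` coming from index `a - 1` follows `Q`. -/
lemma theta_follow {V : Type*} {G : SimpleGraph V} {x y : V} {Q : G.Walk x y} (hQ : Q.IsPath)
    (hint : ∀ a, 0 < a → a < Q.length → ∀ z, G.Adj (Q.getVert a) z →
      s(Q.getVert a, z) ∈ Q.edges) {u v : V} (w : G.Walk u v) :
    ∀ a, 0 < a → a ≤ Q.length → u = Q.getVert a → w.IsPath → Q.getVert (a - 1) ∉ w.support →
    (∃ b, a ≤ b ∧ b ≤ Q.length ∧ v = Q.getVert b ∧ w.length + a = b) ∨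
    (∃ w' : G.Walk y v, w'.IsPath ∧ w'.support ⊆ w.support ∧
      w.length + a = Q.length + w'.length ∧
      ∀ c, a ≤ c → c < Q.length → Q.getVert c ∉ w'.support) := by
  induction w with
  | nil =>
    intro a h0 ha hu _ _
    exact Or.inl ⟨a, le_rfl, ha, hu, by simp⟩
  | @cons u z v h w ih =>
    intro a h0 ha hu hp hn
    rcases Nat.lt_or_ge a Q.length with hlt | hge
    · rw [Walk.cons_isPath_iff] at hp
      subst hu
      have hz := theta_nbr hQ ha (hint a h0 hlt z h)
      rcases hz with ⟨_, hz⟩ | ⟨_, hz⟩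
      · exfalso
        apply hn
        rw [← hz]
        simp
      · rcases ih (a + 1) (by omega) hlt hz hp.1 (by simpa using hp.2) with
          ⟨b, hb1, hb2, hb3, hb4⟩ | ⟨w', h1, h2, h3, h4⟩
        · exact Or.inl ⟨b, by omega, hb2, hb3, by simp; omega⟩
        · refine Or.inr ⟨w', h1, fun _ hh => by simp [h2 hh], by simp; omega, ?_⟩
          intro c hc hc'
          rcases Nat.lt_or_ge a c with hac | hac
          · exact h4 c hac hc'
          · have : c = a := by omega
            subst this
            exact fun hh => hp.2 (h2 hh)
    · have : a = Q.length := by omega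
      subst this
      have hy : u = y := by simpa using hu
      subst hy
      exact Or.inr ⟨Walk.cons h w, hp, fun _ hh => hh, by omega, fun c hc hc' => by omega⟩

/-- A nontrivial path starting at the end-vertex `x` follows one of the paths. -/
lemma theta_entry {V ι : Type*} {G : SimpleGraph V} {x y : V} (p : ι → G.Walk x y) (hxy : x ≠ y)
    (hpath : ∀ i, (p i).IsPath)
    (hdisj : ∀ i j, i ≠ j → ∀ w, w ∈ (p i).support → w ∈ (p j).support → w = x ∨ w = y)
    (hedges : ∀ e : Sym2 V, e ∈ G.edgeSet ↔ ∃ i, e ∈ (p i).edges)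
    {v : V} (w : G.Walk x v) (hw : w.IsPath) (hv : x ≠ v) :
    ∃ i, (∃ b, 0 < b ∧ b ≤ (p i).length ∧ v = (p i).getVert b ∧ w.length = b) ∨
      (∃ w' : G.Walk y v, w'.IsPath ∧ w'.support ⊆ w.support ∧ x ∉ w'.support ∧
        w.length = (p i).length + w'.length ∧
        ∀ c, 0 < c → c < (p i).length → (p i).getVert c ∉ w'.support) := by
  cases w with
  | nil => exact absurd rfl hv
  | @cons _ z _ h w =>
    rw [Walk.cons_isPath_iff] at hw
    obtain ⟨i, hi⟩ := (hedges s(x, z)).1 h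
    have hz : 0 < (p i).length ∧ z = (p i).getVert 1 := by
      rcases theta_nbr (hpath i) (a := 0) (z := z) (by omega) (by simpa using hi) with h | h
      · omega
      · simpa using h
    have hint : ∀ a, 0 < a → a < (p i).length → ∀ z, G.Adj ((p i).getVert a) z →
      s((p i).getVert a, z) ∈ (p i).edges := by
      intro a h0 ha z hz
      obtain ⟨j, hj⟩ := (hedges s((p i).getVert a, z)).1 hz
      by_cases hij : i = j
      · exact hij ▸ hj
      · exfalso
        rcases hdisj i j hij _ ((p i).getVert_mem_support a)
          ((p j).fst_mem_support_of_mem_edges hj) with h | h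
        · have := theta_inj (hpath i) (b := 0) ha.le (by omega) (by simpa using h)
          omega
        · have := theta_inj (hpath i) (b := (p i).length) ha.le (by omega) (by simpa using h)
          omega
    refine ⟨i, ?_⟩
    rcases theta_follow (hpath i) hint w 1 (by omega) hz.1 hz.2 hw.1 (by simpa using hw.2) with
      ⟨b, hb1, hb2, hb3, hb4⟩ | ⟨w', h1, h2, h3, h4⟩
    · exact Or.inl ⟨b, by omega, hb2, hb3, by simpa using hb4⟩
    · exact Or.inr ⟨w', h1, fun _ hh => by simp [h2 hh], fun hh => hw.2 (h2 hh), by simpa using h3, h4⟩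

theorem stmt_17 {V : Type*} (G : SimpleGraph V) (k t : ℕ) (hk : 2 ≤ k) (ht : 2 ≤ t)
    (q : Fin t → ℕ) (hmono : ∀ i j : Fin t, i ≤ j → q j ≤ q i) (hpos : ∀ i, 1 ≤ q i)
    (hpen : 2 ≤ q ⟨t - 2, by omega⟩) (hG : G.IsGenTheta t q)
    (hq : q ⟨0, by omega⟩ + q ⟨1, by omega⟩ ≤ 2 * k - 2) :
    ¬ G.KColorConnectable k := by
  rintro ⟨c, hc⟩
  obtain ⟨x, y, hxy, p, hpath, hlen, hdisj, hverts, hedges⟩ := hG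
  set i0 : Fin t := ⟨0, by omega⟩ with hi0
  set i1 : Fin t := ⟨1, by omega⟩ with hi1
  have hle0 : ∀ i, q i ≤ q i0 := fun i => hmono i0 i (Fin.mk_le_of_le_val (by omega))
  have hle1 : ∀ i, i ≠ i0 → q i ≤ q i1 := fun i hi => hmono i1 i (by
    rw [Fin.le_def]
    have : i.val ≠ 0 := fun h => hi (Fin.ext h)
    simp only [hi1]
    omega)
  have hp0 := hpos i0
  obtain ⟨m, hm⟩ : ∃ m, m = min (k - 1) (q i0) := ⟨_, rfl⟩
  obtain ⟨v, hv⟩ : ∃ v, v = (p i0).getVert m := ⟨_, rfl⟩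
  have hxv : x ≠ v := by
    intro h
    have := theta_inj (hpath i0) (a := 0) (b := m) (by omega) (by rw [hlen]; omega)
      (by rw [← hv]; simpa using h)
    omega
  obtain ⟨P, hP, hcard⟩ := hc x v hxv
  have hk' : k ≤ P.length := by
    refine hcard.trans ((List.toFinset_card_le _).trans ?_)
    simp
  have hvy : v = y → m = q i0 := by
    intro h
    have := theta_inj (hpath i0) (a := m) (b := (p i0).length) (by rw [hlen]; omega) le_rfl
      (by rw [← hv]; simpa using h)
    rw [this, hlen]
  have hmem : v ∈ (p i0).support := hv ▸ (p i0).getVert_mem_support m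
  obtain ⟨i, h⟩ := theta_entry p hxy hpath hdisj hedges P hP hxv
  have hli := hle0 i
  rcases h with ⟨b, hb0, hb1, hb2, hb3⟩ | ⟨w', h1, _, h2, h3, h4⟩
  · rw [hlen] at hb1
    by_cases hi : i = i0
    · subst hi
      have := theta_inj (hpath i0) (a := m) (b := b) (by rw [hlen]; omega) (by rw [hlen]; omega)
        (by rw [← hv, hb2])
      omega
    · rcases hdisj i i0 hi v (hb2 ▸ (p i).getVert_mem_support b) hmem with h | h
      · exact hxv h.symm
      · have := hvy h
        omega
  · rw [hlen] at h3
    by_cases hy : v = y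
    · have := hvy hy
      subst hy
      have hn := Walk.isPath_iff_nil.1 h1
      rw [Walk.nil_iff_length_eq.1 hn] at h3
      simp at h3
      omega
    · have hmlt : m < q i0 := by
        rcases Nat.lt_or_ge m (q i0) with h | h
        · exact h
        · exfalso
          apply hy
          rw [hv, show m = (p i0).length by rw [hlen]; omega]
          simp
      have hi : i ≠ i0 := by
        rintro rfl
        exact h4 m (by omega) (by rw [hlen]; omega) (hv ▸ w'.end_mem_support)
      have hli1 := hle1 i hi
      obtain ⟨j, h⟩ := theta_entry (fun i => (p i).reverse) hxy.symm (fun i => (hpath i).reverse)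
        (fun i j hij w hw hw' => (hdisj i j hij w (by simpa using hw) (by simpa using hw')).symm)
        (fun e => by simpa using hedges e) w' h1 (Ne.symm hy)
      rcases h with ⟨b, hb0, hb1, hb2, hb3⟩ | ⟨w'', _, g3, _, _, _⟩
      · simp only [Walk.length_reverse, hlen] at hb1
        simp only [Walk.getVert_reverse, hlen] at hb2
        by_cases hj : j = i0
        · subst hj
          have := theta_inj (hpath i0) (a := m) (b := q i0 - b) (by rw [hlen]; omega)
            (by rw [hlen]; omega) (by rw [← hv, hb2])
          omega
        · rcases hdisj j i0 hj v (hb2 ▸ (p j).getVert_mem_support _) hmem with h | h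
          · exact hxv h.symm
          · exact hy h
      · exact h2 (g3 w''.start_mem_support)
end
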